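/- Let n ∈ ℕ, let a : Fin n → ℝ be a coefficient vector, b ∈ ℝ, let i be an index with a i < 0, and let ℓ, u : Fin n → ℝ satisfy ℓ j ≤ u j for every j ≠ i. Define T := (b − ∑_{j ≠ i, a j > 0} a j · ℓ j − ∑_{j ≠ i, a j < 0} a j · u j) / a i. Then for every x ∈ ℝ: there exists y : Fin n → ℝ with y i = x, ℓ j ≤ y j ≤ u j for all j ≠ i, and ∑_j a j · y j ≤ b, if and only if x ≥ T. In particular, T is exactly the tightened lower bound on variable i computed by the bound-tightening formula of the constraint propagation-based sampling algorithm when the coefficient of variable i is negative. -/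

import Mathlib

/-!
Once `y i = x` is fixed, the left-hand side is smallest when every other variable sits at the end
of its interval favoured by the sign of its coefficient. Hence a feasible completion exists iff
this single vertex of the box is feasible, which is a linear inequality in `x`; dividing it by
`a i < 0` turns the upper bound on `a i * x` into a lower bound on `x`.
-/

section Box

variable {ι R : Type*} [Ring R] [LinearOrder R]

/-- The vertex of the box `∏ j, [ℓ j, u j]` at which the linear form `y ↦ ∑ j, a j * y j` is
minimal. Coordinates with `a j = 0`, which do not affect the form, are placed at `u j`. -/
def boxMinimizer (a ℓ u : ι → R) (j : ι) : R :=
  if 0 < a j then ℓ j else u j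

theorem boxMinimizer_mem_Icc (a : ι → R) {ℓ u : ι → R} {j : ι} (hj : ℓ j ≤ u j) :
    boxMinimizer a ℓ u j ∈ Set.Icc (ℓ j) (u j) := by
  unfold boxMinimizer
  split_ifs
  exacts [Set.left_mem_Icc.2 hj, Set.right_mem_Icc.2 hj]

theorem mul_boxMinimizer_le [IsOrderedRing R] (a : ι → R) {ℓ u y : ι → R} {j : ι}
    (hy : y j ∈ Set.Icc (ℓ j) (u j)) : a j * boxMinimizer a ℓ u j ≤ a j * y j := by
  unfold boxMinimizer
  split_ifs with ha
  · exact mul_le_mul_of_nonneg_left hy.1 ha.le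
  · exact mul_le_mul_of_nonpos_left hy.2 (not_lt.1 ha)

theorem isLeast_sum_mul_boxMinimizer [IsOrderedRing R] (s : Finset ι) (a : ι → R) {ℓ u : ι → R}
    (hlu : ∀ j ∈ s, ℓ j ≤ u j) :
    IsLeast ((fun y ↦ ∑ j ∈ s, a j * y j) '' (s : Set ι).pi fun j ↦ Set.Icc (ℓ j) (u j))
      (∑ j ∈ s, a j * boxMinimizer a ℓ u j) := by
  refine ⟨⟨boxMinimizer a ℓ u, fun j hj ↦ boxMinimizer_mem_Icc a (hlu j hj), rfl⟩, ?_⟩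
  rintro _ ⟨y, hy, rfl⟩
  exact Finset.sum_le_sum fun j hj ↦ mul_boxMinimizer_le a (hy j hj)

theorem sum_mul_boxMinimizer (s : Finset ι) (a ℓ u : ι → R) :
    ∑ j ∈ s, a j * boxMinimizer a ℓ u j =
      ∑ j ∈ s with 0 < a j, a j * ℓ j + ∑ j ∈ s with a j < 0, a j * u j := by
  rw [Finset.sum_filter, Finset.sum_filter, ← Finset.sum_add_distrib]
  refine Finset.sum_congr rfl fun j _ ↦ ?_
  rcases lt_trichotomy (a j) 0 with ha | ha | ha <;> simp [boxMinimizer, ha, ha.not_gt]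

theorem exists_completion_sum_mul_le_iff [IsOrderedRing R] [Fintype ι] [DecidableEq ι]
    (a : ι → R) (b : R) (i : ι) {ℓ u : ι → R} (hlu : ∀ j, j ≠ i → ℓ j ≤ u j) (x : R) :
    (∃ y : ι → R, y i = x ∧ (∀ j, j ≠ i → y j ∈ Set.Icc (ℓ j) (u j)) ∧ ∑ j, a j * y j ≤ b) ↔
      a i * x + ∑ j ∈ Finset.univ.erase i, a j * boxMinimizer a ℓ u j ≤ b := by
  have split_sum (y : ι → R) :
      ∑ j, a j * y j = a i * y i + ∑ j ∈ Finset.univ.erase i, a j * y j :=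
    (Finset.add_sum_erase _ _ (Finset.mem_univ i)).symm
  have least := isLeast_sum_mul_boxMinimizer (Finset.univ.erase i) a
    fun j hj ↦ hlu j (Finset.ne_of_mem_erase hj)
  constructor
  · rintro ⟨y, rfl, hy, hyb⟩
    have := least.2 ⟨y, fun j hj ↦ hy j (Finset.ne_of_mem_erase hj), rfl⟩
    grw [this, ← split_sum, hyb]
  · intro hb
    obtain ⟨z, hz, hzmin⟩ := least.1
    refine ⟨Function.update z i x, Function.update_self .., fun j hj ↦ ?_, ?_⟩
    · rw [Function.update_of_ne hj]
      exact hz j (by simpa using hj)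
    · have update_off : ∑ j ∈ Finset.univ.erase i, a j * Function.update z i x j =
          ∑ j ∈ Finset.univ.erase i, a j * z j :=
        Finset.sum_congr rfl fun j hj ↦ by rw [Function.update_of_ne (Finset.ne_of_mem_erase hj)]
      rwa [split_sum, Function.update_self, update_off.trans hzmin]

end Box

theorem bound_tightening_neg_coeff_general {ι K : Type*} [Fintype ι] [DecidableEq ι]
    [Field K] [LinearOrder K] [IsStrictOrderedRing K]
    (a : ι → K) (b : K) (i : ι) (hai : a i < 0)
    (ℓ u : ι → K) (hlu : ∀ j, j ≠ i → ℓ j ≤ u j) (x : K) :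
    (∃ y : ι → K, y i = x ∧ (∀ j, j ≠ i → ℓ j ≤ y j ∧ y j ≤ u j) ∧ ∑ j, a j * y j ≤ b) ↔
      x ≥ (b - ∑ j with j ≠ i ∧ 0 < a j, a j * ℓ j - ∑ j with j ≠ i ∧ a j < 0, a j * u j) /
        a i := by
  have filter_erase (p : ι → Prop) [DecidablePred p] :
      (Finset.univ.erase i).filter p = Finset.univ.filter fun j ↦ j ≠ i ∧ p j := by
    ext j
    simp
  refine (exists_completion_sum_mul_le_iff a b i hlu x).trans ?_
  rw [sum_mul_boxMinimizer, filter_erase, filter_erase, ge_iff_le, div_le_iff_of_neg hai,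
    sub_sub, le_sub_iff_add_le, mul_comm x]

/-- Bound tightening for a negative-coefficient variable: the tightened lower bound
`T = (b − ∑_{j ≠ i, a j > 0} a j ℓ j − ∑_{j ≠ i, a j < 0} a j u j) / a i` exactly
characterizes the values of variable `i` that admit a feasible completion. -/
theorem bound_tightening_neg_coeff
    (n : ℕ) (a : Fin n → ℝ) (b : ℝ) (i : Fin n) (hai : a i < 0)
    (ℓ u : Fin n → ℝ) (hlu : ∀ j : Fin n, j ≠ i → ℓ j ≤ u j) :
    ∀ x : ℝ,
      (∃ y : Fin n → ℝ, y i = x ∧ (∀ j : Fin n, j ≠ i → ℓ j ≤ y j ∧ y j ≤ u j) ∧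
        ∑ j, a j * y j ≤ b) ↔
      x ≥ (b - ∑ j ∈ Finset.univ.filter (fun j => j ≠ i ∧ 0 < a j), a j * ℓ j
             - ∑ j ∈ Finset.univ.filter (fun j => j ≠ i ∧ a j < 0), a j * u j) / a i :=
  bound_tightening_neg_coeff_general a b i hai ℓ u hlu
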